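/- arXiv:1003.0982 — 2 statements merged into one kernel-verified Lean document; each statement's English description precedes it below -/
import Mathlib

section
/- Let p be a prime, E a group of type E(2) of order p^{2m+2} (a central product of an extraspecial p-group of order p^{2m+1} with a cyclic group of order p^2 amalgamating centers), and T a finite abelian p-group that is not elementary abelian (its exponent exceeds p). Set G = E × T, of order p^n. Then |M(G)| ≤ p^{(n-1)(n-2)/2 - 2}. -/
/-- The kernel of the canonical free presentation `FreeGroup G → G`. -/
def presentationKernel (G : Type u) [Group G] : Subgroup (FreeGroup G) :=
  (FreeGroup.lift (id : G → G)).ker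

/-- The Schur multiplier `M(G) = H₂(G, ℤ)` (second integral group homology) of a
group `G`, realised via Hopf's integral formula `H₂(G, ℤ) ≅ (R ⊓ [F, F]) / [F, R]`,
where `F = FreeGroup G` is the canonical free group surjecting onto `G` with
kernel `R`. -/
def SchurMultiplier (G : Type u) [Group G] : Type u :=
  ↥(presentationKernel G ⊓ commutator (FreeGroup G)) ⧸
    (⁅(⊤ : Subgroup (FreeGroup G)), presentationKernel G⁆.subgroupOf
      (presentationKernel G ⊓ commutator (FreeGroup G)))

/-- A finite `p`-group `H` is extraspecial if its center, derived subgroup and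
Frattini subgroup coincide and have order `p`. -/
def IsExtraspecial (p : ℕ) (H : Type*) [Group H] : Prop :=
  Subgroup.center H = commutator H ∧ Subgroup.center H = frattini H ∧
    Nat.card (Subgroup.center H) = p

/-- `E` is a group of type `E(2)` (with parameter `m`): a central product of an
extraspecial `p`-group `H` of order `p^(2m+1)` with a cyclic group `K` of order
`p^2`, amalgamated over the center of `H`: `H` and `K` commute elementwise,
`E = HK` and `H ⊓ K = Z(H)`. -/
def IsTypeE2 (p m : ℕ) (E : Type*) [Group E] : Prop :=
  ∃ H K : Subgroup E,
    IsExtraspecial p H ∧ Nat.card H = p ^ (2 * m + 1) ∧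
    IsCyclic K ∧ Nat.card K = p ^ 2 ∧
    (∀ h ∈ H, ∀ k ∈ K, h * k = k * h) ∧
    H ⊔ K = ⊤ ∧ (H ⊓ K).subgroupOf H = Subgroup.center H

open scoped commutatorElement

instance presentationKernel_normal (G : Type*) [Group G] : (presentationKernel G).Normal := by
  unfold presentationKernel; infer_instance

open scoped Pointwise in
theorem card_sup_le_aux {W : Type*} [CommGroup W] (P Q : Subgroup W) [Finite P] [Finite Q] :
    Finite (P ⊔ Q : Subgroup W) ∧ Nat.card (P ⊔ Q : Subgroup W) ≤ Nat.card P * Nat.card Q := by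
  have h : ((P ⊔ Q : Subgroup W) : Set W) = (P : Set W) * (Q : Set W) := Subgroup.mul_normal P Q
  have hf : ((P ⊔ Q : Subgroup W) : Set W).Finite := by
    rw [h]; exact Set.Finite.mul (Set.toFinite _) (Set.toFinite _)
  refine ⟨hf.to_subtype, ?_⟩
  have := Set.natCard_mul_le (s := (P : Set W)) (t := (Q : Set W))
  rw [← h] at this
  exact this

def bilSpan {A W : Type*} [Group A] [CommGroup W] (β : A →* A →* W) (B : Subgroup A) :
    Subgroup W := Subgroup.closure {w | ∃ a ∈ B, ∃ b ∈ B, β a b = w}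

theorem bil_step {A W : Type*} [Group A] [CommGroup W] (β : A →* A →* W)
    (hβ : ∀ a, β a a = 1) (B : Subgroup A) (x : A) :
    bilSpan β (B ⊔ Subgroup.zpowers x) ≤ bilSpan β B ⊔ B.map (β x) := by
  have hsw : ∀ a b, β a b = (β b a)⁻¹ := by
    intro a b
    have := hβ (a * b)
    simp only [map_mul, MonoidHom.mul_apply, hβ, one_mul, mul_one] at this
    rw [eq_inv_iff_mul_eq_one, mul_comm]
    simpa [mul_comm] using this
  set S := bilSpan β B ⊔ B.map (β x) with hS
  have h1 : ∀ a ∈ B, ∀ b ∈ B, β a b ∈ S := fun a ha b hb =>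
    Subgroup.mem_sup_left (Subgroup.subset_closure ⟨a, ha, b, hb, rfl⟩)
  have h2 : ∀ b ∈ B, β x b ∈ S := fun b hb => Subgroup.mem_sup_right ⟨b, hb, rfl⟩
  have h3 : ∀ b ∈ B, β b x ∈ S := fun b hb => by rw [hsw]; exact S.inv_mem (h2 b hb)
  have key : ∀ a, β a x ∈ S → (∀ b ∈ B, β a b ∈ S) → 
      ∀ b ∈ B ⊔ Subgroup.zpowers x, β a b ∈ S := by
    intro a hx hb
    have : B ⊔ Subgroup.zpowers x ≤ S.comap (β a) := by
      rw [sup_le_iff, Subgroup.zpowers_le]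
      exact ⟨hb, hx⟩
    exact this
  unfold bilSpan at *
  rw [Subgroup.closure_le]
  rintro w ⟨a, ha, b, hb, rfl⟩
  have : B ⊔ Subgroup.zpowers x ≤ S.comap (β.flip b) := by
    rw [sup_le_iff, Subgroup.zpowers_le]
    exact ⟨fun a ha => key a (h3 a ha) (h1 a ha) b hb, key x (by rw [hβ]; exact S.one_mem) h2 b hb⟩
  exact this ha

theorem bil_bound {A W : Type*} [Group A] [CommGroup W] (β : A →* A →* W)
    (hβ : ∀ a, β a a = 1) {p N : ℕ} (hp : p.Prime) (hA : Nat.card A = p ^ N)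
    (a : A) (ha : a ^ p ≠ 1) :
    Finite (bilSpan β ⊤) ∧ Nat.card (bilSpan β ⊤) ≤ p ^ (N * (N - 1) / 2 - 1) := by
  have : Fact p.Prime := ⟨hp⟩
  have : Finite A := Nat.finite_of_card_ne_zero (by rw [hA]; exact pow_ne_zero _ hp.ne_zero)
  obtain ⟨k, hkN, hk⟩ := (Nat.dvd_prime_pow hp).1 (hA ▸ orderOf_dvd_natCard a)
  have hk2 : 2 ≤ k := by
    by_contra! h
    apply ha
    apply orderOf_dvd_iff_pow_eq_one.1
    rw [hk]
    calc p ^ k ∣ p ^ 1 := pow_dvd_pow _ (by omega)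
      _ = p := pow_one p
  have main : ∀ i, k ≤ i → i ≤ N → ∃ B : Subgroup A, Nat.card B = p ^ i ∧
      Finite (bilSpan β B) ∧ Nat.card (bilSpan β B) ≤ p ^ (i * (i - 1) / 2 - 1) := by
    intro i hi
    induction i, hi using Nat.le_induction with
    | base =>
      intro _
      have hb : bilSpan β (Subgroup.zpowers a) = ⊥ := by
        unfold bilSpan
        rw [eq_bot_iff, Subgroup.closure_le]
        rintro w ⟨b, ⟨i, rfl⟩, c, ⟨j, rfl⟩, rfl⟩
        simp [hβ]
      refine ⟨Subgroup.zpowers a, by rw [Nat.card_zpowers, hk], ?_, ?_⟩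
      · rw [hb]; infer_instance
      · rw [hb]; simpa using Nat.one_le_pow _ _ hp.pos
    | succ i hi ih =>
      intro hiN
      obtain ⟨B, hB, hfin, hcard⟩ := ih (by omega)
      obtain ⟨B', hB', hle⟩ := Sylow.exists_subgroup_card_pow_succ
        (hA ▸ pow_dvd_pow p hiN) hB
      have hne : ¬ B' ≤ B := by
        intro h
        have := le_antisymm h hle
        rw [this, hB] at hB'
        have := Nat.pow_right_injective hp.two_le hB'
        omega
      obtain ⟨x, hx', hx⟩ := SetLike.not_le_iff_exists.1 hne
      have hsup : B ⊔ Subgroup.zpowers x = B' := by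
        have hle' : B ⊔ Subgroup.zpowers x ≤ B' := by
          rw [sup_le_iff, Subgroup.zpowers_le]; exact ⟨hle, hx'⟩
        have hd := Subgroup.card_dvd_of_le hle'
        rw [hB'] at hd
        obtain ⟨j, hj, hj'⟩ := (Nat.dvd_prime_pow hp).1 hd
        have hd2 := Subgroup.card_dvd_of_le (le_sup_left : B ≤ B ⊔ Subgroup.zpowers x)
        rw [hB, hj'] at hd2
        have hij := (Nat.pow_dvd_pow_iff_le_right hp.one_lt).1 hd2
        have : j ≠ i := by
          rintro rfl
          apply hx
          have : B = B ⊔ Subgroup.zpowers x :=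
            Subgroup.eq_of_le_of_card_ge le_sup_left (by rw [hB, hj'])
          rw [this]
          exact Subgroup.mem_sup_right (Subgroup.mem_zpowers x)
        have : j = i + 1 := by omega
        subst this
        exact Subgroup.eq_of_le_of_card_ge hle' (by rw [hB', hj'])
      refine ⟨B', hB', ?_⟩
      have hst := bil_step β hβ B x
      rw [hsup] at hst
      have hF : Finite (B.map (β x)) := Finite.of_surjective (fun b : B => (⟨β x b, b, b.2, rfl⟩ : B.map (β x)))
          (by rintro ⟨_, b, hb, rfl⟩; exact ⟨⟨b, hb⟩, rfl⟩)
      obtain ⟨f1, c1⟩ := card_sup_le_aux (bilSpan β B) (B.map (β x))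
      have c2 : Nat.card (B.map (β x)) ≤ p ^ i := by
        rw [← hB]; exact Nat.card_le_card_of_surjective (fun b : B => (⟨β x b, b, b.2, rfl⟩ : B.map (β x))) 
          (by rintro ⟨_, b, hb, rfl⟩; exact ⟨⟨b, hb⟩, rfl⟩)
      refine ⟨Finite.of_injective _ (Subgroup.inclusion_injective hst), ?_⟩
      calc _ ≤ _ := Nat.card_le_card_of_injective _ (Subgroup.inclusion_injective hst)
        _ ≤ _ := c1
        _ ≤ p ^ (i * (i - 1) / 2 - 1) * p ^ i := Nat.mul_le_mul hcard c2
        _ = _ := by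
          rw [← pow_add]
          congr 1
          obtain ⟨l, rfl⟩ : ∃ l, i = l + 2 := ⟨i - 2, by omega⟩
          have e : (l + 2 + 1) * (l + 2 + 1 - 1) = (l + 2) * (l + 2 - 1) + 2 * (l + 2) := by
            simp only [Nat.add_sub_cancel, show l + 2 - 1 = l + 1 by omega]; ring
          rw [e, Nat.add_mul_div_left _ _ (by norm_num)]
          have : 1 ≤ (l + 2) * (l + 2 - 1) / 2 := by
            rw [Nat.le_div_iff_mul_le (by norm_num)]
            simp only [show l + 2 - 1 = l + 1 by omega]; nlinarith
          omega
  obtain ⟨B, hB, h⟩ := main N hkN le_rfl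
  have : B = ⊤ := Subgroup.eq_top_of_card_eq B (by rw [hB, hA])
  rwa [this] at h

theorem comm_bound {X : Type*} [Group X] (Z : Subgroup X) [Z.Normal]
    (hZ : Z ≤ Subgroup.center X) (hX : commutator X ≤ Z)
    {p N : ℕ} (hp : p.Prime) (hA : Z.index = p ^ N) (x : X) (hx : x ^ p ∉ Z) :
    Finite (commutator X) ∧ Nat.card (commutator X) ≤ p ^ (N * (N - 1) / 2 - 1) := by
  have hc : ∀ x y : X, ⁅x, y⁆ ∈ Subgroup.center X := fun x y =>
    hZ (hX (Subgroup.commutator_mem_commutator (Subgroup.mem_top _) (Subgroup.mem_top _)))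
  have hc' : ∀ x y g : X, g * ⁅x, y⁆ = ⁅x, y⁆ * g := fun x y => Subgroup.mem_center_iff.1 (hc x y)
  have hr : ∀ x y z : X, ⁅x, y * z⁆ = ⁅x, y⁆ * ⁅x, z⁆ := by
    intro x y z
    have : ⁅x, y * z⁆ = ⁅x, y⁆ * (y * ⁅x, z⁆ * y⁻¹) := by simp only [commutatorElement_def]; group
    rw [this, hc']; group
  have hl : ∀ x y z : X, ⁅x * y, z⁆ = ⁅x, z⁆ * ⁅y, z⁆ := by
    intro x y z
    have : ⁅x * y, z⁆ = (x * ⁅y, z⁆ * x⁻¹) * ⁅x, z⁆ := by simp only [commutatorElement_def]; group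
    rw [this, hc', hc']; group
  let _ : CommGroup (Subgroup.center X) :=
    { (inferInstance : Group (Subgroup.center X)) with
      mul_comm := fun a b => Subtype.ext (Subgroup.mem_center_iff.1 b.2 a) }
  let f : X → X →* Subgroup.center X := fun x =>
    MonoidHom.mk' (fun y => ⟨⁅x, y⁆, hc x y⟩) (fun y z => Subtype.ext (hr x y z))
  have hf : ∀ x y, ((f x y : Subgroup.center X) : X) = ⁅x, y⁆ := fun _ _ => rfl
  let φ : X →* (X ⧸ Z →* Subgroup.center X) :=
    MonoidHom.mk' (fun x => QuotientGroup.lift Z (f x) (by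
      intro z hz
      have := Subgroup.mem_center_iff.1 (hZ hz) x
      exact Subtype.ext (by rw [hf]; exact commutatorElement_eq_one_iff_mul_comm.2 this)))
      (by
        intro a b
        ext y
        exact hl a b y)
  let β : (X ⧸ Z) →* (X ⧸ Z →* Subgroup.center X) := QuotientGroup.lift Z φ (by
    intro z hz
    ext y
    have := Subgroup.mem_center_iff.1 (hZ hz) y
    exact commutatorElement_eq_one_iff_mul_comm.2 this.symm)
  have hβ : ∀ x y : X, ((β x y : Subgroup.center X) : X) = ⁅x, y⁆ := fun _ _ => rfl
  obtain ⟨h1, h2⟩ := bil_bound β (by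
      intro a
      obtain ⟨a, rfl⟩ := QuotientGroup.mk_surjective a
      exact Subtype.ext (by rw [hβ]; simp)) hp hA (x : X ⧸ Z) (by
      rw [← QuotientGroup.mk_pow, Ne, QuotientGroup.eq_one_iff]; exact hx)
  have hle : commutator X ≤ (bilSpan β ⊤).map (Subgroup.center X).subtype := by
    rw [commutator_def, Subgroup.commutator_le]
    intro a _ b _
    exact ⟨β a b, Subgroup.subset_closure ⟨a, trivial, b, trivial, rfl⟩, hβ a b⟩
  have : Finite ((bilSpan β ⊤).map (Subgroup.center X).subtype) := 
    Finite.of_surjective (fun b : bilSpan β ⊤ => (⟨_, b, b.2, rfl⟩ : (bilSpan β ⊤).map (Subgroup.center X).subtype)) (by rintro ⟨_, b, hb, rfl⟩; exact ⟨⟨b, hb⟩, rfl⟩)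
  refine ⟨Finite.of_injective _ (Subgroup.inclusion_injective hle), ?_⟩
  refine (Nat.card_le_card_of_injective _ (Subgroup.inclusion_injective hle)).trans ?_
  rwa [Subgroup.card_map_of_injective (Subgroup.subtype_injective _)]

theorem pow_comm_aux {X : Type*} [Group X] {w h g : X} (hw : w ∈ Subgroup.center X)
    (e : h * g = w * (g * h)) (n : ℕ) : h ^ n * g = w ^ n * (g * h ^ n) := by
  induction n with
  | zero => simp
  | succ n ih =>
    have hc : ∀ y, y * w = w * y := Subgroup.mem_center_iff.1 hw
    rw [pow_succ h, mul_assoc, e, ← mul_assoc, hc, mul_assoc, ← mul_assoc (h ^ n), ih, pow_succ' w]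
    simp only [mul_assoc]

theorem step1 {X G : Type*} [Group X] [Group G] (π : X →* G) (hs : Function.Surjective π)
    (hk : π.ker ≤ Subgroup.center X) {x c : X} (hx : π x ∈ Subgroup.center G)
    (hc : π c ∈ commutator G) : x * c = c * x := by
  have hw : ∀ y, ⁅x, y⁆ ∈ Subgroup.center X := fun y => hk (by
    rw [MonoidHom.mem_ker, map_commutatorElement]
    exact commutatorElement_eq_one_iff_mul_comm.2 (Subgroup.mem_center_iff.1 hx _).symm)
  let _ : CommGroup (Subgroup.center X) :=
    { (inferInstance : Group (Subgroup.center X)) with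
      mul_comm := fun a b => Subtype.ext (Subgroup.mem_center_iff.1 b.2 a) }
  let φ : X →* Subgroup.center X := MonoidHom.mk' (fun y => ⟨⁅x, y⁆, hw y⟩) (by
    intro y z
    apply Subtype.ext
    change ⁅x, y * z⁆ = ⁅x, y⁆ * ⁅x, z⁆
    have : ⁅x, y * z⁆ = ⁅x, y⁆ * (y * ⁅x, z⁆ * y⁻¹) := by simp only [commutatorElement_def]; group
    rw [this, Subgroup.mem_center_iff.1 (hw z)]; group)
  have h1 : commutator X ≤ φ.ker := Abelianization.commutator_subset_ker φ
  have h2 : commutator G = (commutator X).map π := by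
    rw [commutator_def, commutator_def, Subgroup.map_commutator, Subgroup.map_top_of_surjective π hs]
  rw [h2] at hc
  obtain ⟨d, hd, hdc⟩ := hc
  have hr : d⁻¹ * c ∈ Subgroup.center X := hk (by rw [MonoidHom.mem_ker]; simp [hdc])
  have hd1 : x * d = d * x := by
    have : φ d = 1 := h1 hd
    exact commutatorElement_eq_one_iff_mul_comm.1 (congrArg Subtype.val this)
  have : c = d * (d⁻¹ * c) := by group
  have hr' := Subgroup.mem_center_iff.1 hr x
  generalize d⁻¹ * c = r at *
  rw [this, ← mul_assoc, hd1, mul_assoc, hr', mul_assoc]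

theorem step2 {X G : Type*} [Group X] [Group G] (π : X →* G) (hs : Function.Surjective π)
    (hk : π.ker ≤ Subgroup.center X) {p : ℕ} {x c k : X} {j : ℤ} (hx : π k ∈ Subgroup.center G)
    (hc : π c = (π k ^ p) ^ j) (hxp : π x ^ p ∈ commutator G) : x * c = c * x := by
  have h1 : k * x ^ p = x ^ p * k := step1 π hs hk hx (by rwa [map_pow])
  have hw : k * x * k⁻¹ * x⁻¹ ∈ Subgroup.center X := hk (by
    rw [MonoidHom.mem_ker]
    simp only [map_mul, map_inv]
    rw [← Subgroup.mem_center_iff.1 hx (π x)]; group)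
  obtain ⟨w, hwd⟩ : ∃ w, w = k * x * k⁻¹ * x⁻¹ := ⟨_, rfl⟩
  rw [← hwd] at hw
  have e : k * x = w * (x * k) := by rw [hwd]; group
  have e' : x * k = w⁻¹ * (k * x) := by rw [e]; group
  have a1 := pow_comm_aux hw e p
  have a2 := pow_comm_aux (inv_mem hw) e' p
  rw [h1] at a2
  have a3 : w⁻¹ ^ p = 1 := by simpa using a2
  have a4 : w ^ p = 1 := by simpa using a3
  rw [a4, one_mul] at a1
  have b1 : Commute x ((k ^ p) ^ j) := Commute.zpow_right (show Commute x (k ^ p) from a1.symm) j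
  have hr : ((k ^ p) ^ j)⁻¹ * c ∈ Subgroup.center X := hk (by
    rw [MonoidHom.mem_ker]; simp [hc])
  have : c = ((k ^ p) ^ j) * (((k ^ p) ^ j)⁻¹ * c) := by group
  rw [this]
  exact b1.mul_right (Subgroup.mem_center_iff.1 hr x)

theorem hopf_card (G : Type*) [Group G] :
    Nat.card (SchurMultiplier G) * Nat.card (commutator G) =
      Nat.card (commutator
        (FreeGroup G ⧸ ⁅(⊤ : Subgroup (FreeGroup G)), presentationKernel G⁆)) := by
  set R := presentationKernel G with hR
  set K := ⁅(⊤ : Subgroup (FreeGroup G)), R⁆ with hK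
  have hKR : K ≤ R := Subgroup.commutator_le_right _ _
  have hKF : K ≤ commutator (FreeGroup G) := Subgroup.commutator_mono le_rfl le_top
  have h0 : Nat.card (SchurMultiplier G) = K.relIndex (R ⊓ commutator (FreeGroup G)) := rfl
  have e1 : Nat.card (commutator G) = (R ⊓ commutator (FreeGroup G)).relIndex
      (commutator (FreeGroup G)) := by
    rw [Subgroup.inf_relIndex_right, hR, presentationKernel, Subgroup.relIndex_ker,
      commutator_def, commutator_def, Subgroup.map_commutator, Subgroup.map_top_of_surjective]
    intro g; exact ⟨FreeGroup.of g, by simp⟩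
  have e2 : Nat.card (commutator (FreeGroup G ⧸ K)) = K.relIndex (commutator (FreeGroup G)) := by
    conv_rhs => rw [← QuotientGroup.ker_mk' K]
    rw [Subgroup.relIndex_ker,
      commutator_def, commutator_def, Subgroup.map_commutator, Subgroup.map_top_of_surjective]
    exact QuotientGroup.mk'_surjective K
  rw [h0, e1, e2]
  exact Subgroup.relIndex_mul_relIndex _ _ _ (le_inf hKR hKF) inf_le_right

theorem typeE2_struct {p m : ℕ} (hp : p.Prime) {E : Type*} [Group E] (hE : IsTypeE2 p m E) :
    ∃ H : Subgroup E, ∃ k ∈ Subgroup.center E,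
      Nat.card (commutator H) = p ∧
      commutator E = (commutator H).map H.subtype ∧
      (∀ c ∈ commutator E, ∃ j : ℤ, c = (k ^ p) ^ j) ∧
      (∀ h ∈ H, h ^ p ∈ commutator E) ∧
      (∀ e : E, ∃ h ∈ H, ∃ z ∈ Subgroup.center E, e = h * z) := by
  obtain ⟨H, K, ⟨hZ, -, hcard⟩, -, hcyc, hKc, hcomm, hsup, hinf⟩ := hE
  have hp0 := hp.pos
  have hcard' : Nat.card (commutator H) = p := by rw [← hZ]; exact hcard
  obtain ⟨⟨k, hkK⟩, hk⟩ := hcyc.exists_generator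
  have hKcen : K ≤ Subgroup.center E := by
    have : H ⊔ K ≤ Subgroup.centralizer (K : Set E) := by
      rw [sup_le_iff]
      constructor
      · intro h hh
        rw [Subgroup.mem_centralizer_iff]
        intro g hg; exact (hcomm h hh g hg).symm
      · intro a ha
        rw [Subgroup.mem_centralizer_iff]
        intro g hg
        have := hcyc.isMulCommutative.is_comm.comm (⟨g, hg⟩ : K) ⟨a, ha⟩
        exact congrArg Subtype.val this
    rw [hsup] at this
    intro a ha
    rw [Subgroup.mem_center_iff]
    intro g
    exact (Subgroup.mem_centralizer_iff.1 (this (Subgroup.mem_top g)) a ha).symm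
  have hdec : ∀ e : E, ∃ h ∈ H, ∃ z ∈ K, e = h * z := by
    have hKn : K.Normal := ⟨fun n hn g => by
      rw [Subgroup.mem_center_iff.1 (hKcen hn) g]; simpa using hn⟩
    intro e
    have : e ∈ H ⊔ K := hsup ▸ Subgroup.mem_top e
    obtain ⟨h, hh, z, hz, rfl⟩ := Subgroup.mem_sup_of_normal_right.1 this
    exact ⟨h, hh, z, hz, rfl⟩
  have hE' : commutator E = (commutator H).map H.subtype := by
    apply le_antisymm
    · rw [commutator_def, Subgroup.commutator_le]
      intro a _ b _
      obtain ⟨h, hh, z, hz, rfl⟩ := hdec a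
      obtain ⟨h', hh', z', hz', rfl⟩ := hdec b
      refine ⟨⁅⟨h, hh⟩, ⟨h', hh'⟩⁆, Subgroup.commutator_mem_commutator (Subgroup.mem_top _) (Subgroup.mem_top _), ?_⟩
      have c1 := Subgroup.mem_center_iff.1 (hKcen hz)
      have c2 := Subgroup.mem_center_iff.1 (hKcen hz')
      have : (h * z) * (h' * z') = h * h' * (z * z') := by
        rw [mul_assoc, ← mul_assoc z, ← c1 h']; simp only [mul_assoc]
      have t2 : (h' * z') * (h * z) = h' * h * (z * z') := by
        rw [mul_assoc, ← mul_assoc z', ← c2 h, mul_assoc, c1 z']; simp only [mul_assoc]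
      have hL : ∀ a b : E, ⁅a, b⁆ = (a * b) * (b * a)⁻¹ := by
        intro a b; rw [commutatorElement_def]; group
      rw [map_commutatorElement, hL, hL, this, t2]
      simp only [Subgroup.subtype_apply]
      group
    · rw [commutator_def, commutator_def, Subgroup.map_commutator]
      exact Subgroup.commutator_mono le_top le_top
  have hpw : ∀ d : commutator H, d ^ p = 1 := fun d => by
    rw [← hcard']; exact pow_card_eq_one'
  refine ⟨H, k, hKcen hkK, hcard', hE', ?_, ?_, ?_⟩
  · intro c hc
    rw [hE'] at hc
    obtain ⟨d, hd, rfl⟩ := hc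
    have hdp : (d : E) ^ p = 1 := by
      have := congrArg (fun q : commutator H => ((q : H) : E)) (hpw ⟨d, hd⟩)
      simpa using this
    have hdK : (d : E) ∈ K := by
      have : d ∈ (H ⊓ K).subgroupOf H := by rw [hinf, hZ]; exact hd
      exact (Subgroup.mem_subgroupOf.1 this).2
    obtain ⟨i, hi⟩ := Subgroup.mem_zpowers_iff.1 (hk ⟨d, hdK⟩)
    have hi' : k ^ i = (d : E) := by simpa using congrArg Subtype.val hi
    have ho : orderOf k = p ^ 2 := by
      have := orderOf_eq_card_of_forall_mem_zpowers hk
      rw [hKc] at this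
      rw [← this, Subgroup.orderOf_mk]
    have : k ^ (i * p) = 1 := by rw [zpow_mul, hi', zpow_natCast, hdp]
    have hdv := orderOf_dvd_iff_zpow_eq_one.2 this
    rw [ho, pow_two, Nat.cast_mul] at hdv
    obtain ⟨j, rfl⟩ := Int.dvd_of_mul_dvd_mul_right (by exact_mod_cast hp.ne_zero) hdv
    exact ⟨j, by rw [Subgroup.subtype_apply, ← hi', zpow_mul, zpow_natCast]⟩
  · intro h hh
    rw [hE', ← hZ]
    refine ⟨⟨h, hh⟩ ^ p, ?_, by simp⟩
    change (⟨h, hh⟩ : H) ^ p ∈ Subgroup.center H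
    rw [Subgroup.mem_center_iff]
    intro g
    generalize (⟨h, hh⟩ : H) = a
    have hw : ⁅a, g⁆ ∈ commutator H := Subgroup.commutator_mem_commutator (Subgroup.mem_top _) (Subgroup.mem_top _)
    have hw1 : ⁅a, g⁆ ^ p = 1 := congrArg Subtype.val (hpw ⟨_, hw⟩)
    have := pow_comm_aux (w := ⁅a, g⁆) (h := a) (g := g) (by rw [hZ]; exact hw)
      (by rw [commutatorElement_def]; group) p
    rw [hw1, one_mul] at this
    exact this.symm
  · intro e
    obtain ⟨h, hh, z, hz, rfl⟩ := hdec e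
    exact ⟨h, hh, z, hKcen hz, rfl⟩

/-- If `E` is of type `E(2)` of order `p^(2m+2)` and `T` is a finite abelian `p`-group
that is not elementary abelian, then `G = E × T`, of order `p^n`, satisfies
`|M(G)| ≤ p^((n-1)(n-2)/2 - 2)`. -/
theorem schurMultiplier_typeE2_times_nonelementary_le {p m n : ℕ} (hp : p.Prime)
    {E : Type*} [Group E] (hE : IsTypeE2 p m E) (hEcard : Nat.card E = p ^ (2 * m + 2))
    {T : Type*} [CommGroup T] [Finite T] (hT : IsPGroup p T)
    (hTexp : p < Monoid.exponent T)
    (hG : Nat.card (E × T) = p ^ n) :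
    Nat.card (SchurMultiplier (E × T)) ≤ p ^ ((n - 1) * (n - 2) / 2 - 2) := by
  obtain ⟨H, k, hkc, hcard, hE', hck, hHp, hdec⟩ := typeE2_struct hp hE
  have hcc : commutator (E × T) = (commutator E).map (MonoidHom.inl E T) := by
    apply le_antisymm
    · rw [commutator_def, Subgroup.commutator_le]
      rintro ⟨a, s⟩ _ ⟨b, t⟩ _
      refine ⟨⁅a, b⁆, Subgroup.commutator_mem_commutator (Subgroup.mem_top _) (Subgroup.mem_top _), ?_⟩
      simp only [commutatorElement_def, MonoidHom.inl_apply, Prod.mk_mul_mk, Prod.inv_mk]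
      congr 1
      rw [mul_comm s t]; group
    · rw [commutator_def, commutator_def, Subgroup.map_commutator]
      exact Subgroup.commutator_mono le_top le_top
  have hccard : Nat.card (commutator (E × T)) = p := by
    rw [hcc, Subgroup.card_map_of_injective (fun a b h => congrArg Prod.fst h), hE',
      Subgroup.card_map_of_injective (Subgroup.subtype_injective _), hcard]
  have hn : 4 ≤ n := by
    rw [Nat.card_prod, hEcard] at hG
    obtain ⟨s, -, hs⟩ := (Nat.dvd_prime_pow hp).1 (hG ▸ dvd_mul_left (Nat.card T) _)
    have h1 : Monoid.exponent T ≤ p ^ s :=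
      hs ▸ Nat.le_of_dvd Nat.card_pos Group.exponent_dvd_nat_card
    have h2 : p ^ 1 < p ^ s := by rw [pow_one]; omega
    have h3 := (Nat.pow_lt_pow_iff_right hp.one_lt).1 h2
    rw [hs, ← pow_add] at hG
    have := Nat.pow_right_injective hp.two_le hG
    omega
  have hmul := hopf_card (E × T)
  rw [hccard] at hmul
  set K := ⁅(⊤ : Subgroup (FreeGroup (E × T))), presentationKernel (E × T)⁆ with hK
  have hKR : K ≤ presentationKernel (E × T) := Subgroup.commutator_le_right _ _
  let π : FreeGroup (E × T) ⧸ K →* E × T :=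
    QuotientGroup.lift K (FreeGroup.lift (id : E × T → E × T)) hKR
  have hs : Function.Surjective π := fun g => ⟨(FreeGroup.of g : FreeGroup (E × T)), by
    change FreeGroup.lift (id : E × T → E × T) (FreeGroup.of g) = g
    simp⟩
  have hker : π.ker ≤ Subgroup.center _ := by
    intro y hy
    obtain ⟨y, rfl⟩ := QuotientGroup.mk_surjective y
    have hy' : y ∈ presentationKernel (E × T) := hy
    rw [Subgroup.mem_center_iff]
    intro g
    obtain ⟨g, rfl⟩ := QuotientGroup.mk_surjective g
    rw [← commutatorElement_eq_one_iff_mul_comm]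
    have : ⁅g, y⁆ ∈ K := Subgroup.commutator_mem_commutator (Subgroup.mem_top _) hy'
    exact (QuotientGroup.eq_one_iff _).2 this
  have hcen : (commutator (E × T)).comap π ≤ Subgroup.center _ := by
    intro c hc
    have hc' : π c ∈ commutator (E × T) := hc
    rw [Subgroup.mem_center_iff]
    intro x
    obtain ⟨h, hh, z, hz, hx⟩ := hdec (π x).1
    obtain ⟨x1, hx1⟩ := hs (h, 1)
    obtain ⟨k1, hk1⟩ := hs (k, 1)
    have hx2 : π (x1⁻¹ * x) ∈ Subgroup.center (E × T) := by
      rw [map_mul, map_inv, hx1, Subgroup.mem_center_iff]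
      rintro ⟨g, t⟩
      ext
      · simpa [hx] using Subgroup.mem_center_iff.1 hz g
      · simp [mul_comm]
    have c2 := step1 π hs hker hx2 hc'
    have c1 : x1 * c = c * x1 := by
      have hc2 := hc'
      rw [hcc] at hc2
      obtain ⟨d, hd, hdc⟩ := hc2
      obtain ⟨j, rfl⟩ := hck d hd
      refine step2 π hs hker (p := p) (k := k1) (j := j) ?_ ?_ ?_
      · rw [hk1, Subgroup.mem_center_iff]
        rintro ⟨g, t⟩
        ext
        · simpa using Subgroup.mem_center_iff.1 hkc g
        · simp
      · rw [hk1, ← hdc]; ext <;> simp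
      · rw [hx1, hcc]
        exact ⟨h ^ p, hHp h hh, by ext <;> simp⟩
    have c3 : Commute (x1 * (x1⁻¹ * x)) c := Commute.mul_left c1 c2
    rwa [mul_inv_cancel_left] at c3
  have hle : commutator (FreeGroup (E × T) ⧸ K) ≤ (commutator (E × T)).comap π := by
    rw [← Subgroup.map_le_iff_le_comap, commutator_def, commutator_def, Subgroup.map_commutator]
    exact Subgroup.commutator_mono le_top le_top
  have hidx : ((commutator (E × T)).comap π).index = p ^ (n - 1) := by
    rw [Subgroup.index_comap_of_surjective _ hs]
    have := Subgroup.card_mul_index (commutator (E × T))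
    rw [hccard, hG] at this
    apply Nat.eq_of_mul_eq_mul_left hp.pos
    rw [this, ← pow_succ']
    congr 1; omega
  obtain ⟨t, ht⟩ : ∃ t : T, t ^ p ≠ 1 := by
    by_contra! h
    exact absurd (Nat.le_of_dvd hp.pos (Monoid.exponent_dvd_of_forall_pow_eq_one h)) (by omega)
  obtain ⟨x, hx⟩ := hs (1, t)
  obtain ⟨hf, hb⟩ := comm_bound _ hcen hle hp hidx x (by
    rw [Subgroup.mem_comap, map_pow, hx, hcc]
    rintro ⟨d, -, hd⟩
    have := congrArg Prod.snd hd
    simp at this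
    exact ht this.symm)
  rw [← hmul] at hb
  have : 2 ≤ (n - 1) * (n - 1 - 1) / 2 := by
    rw [Nat.le_div_iff_mul_le (by norm_num)]
    exact Nat.mul_le_mul (show 2 ≤ n - 1 by omega) (show 2 ≤ n - 1 - 1 by omega)
  have e : (n - 1) * (n - 1 - 1) / 2 - 1 = ((n - 1) * (n - 2) / 2 - 2) + 1 := by
    rw [show n - 1 - 1 = n - 2 by omega] at *
    omega
  rw [e, pow_succ] at hb
  exact Nat.le_of_mul_le_mul_right hb hp.pos
end

section
/- Let p be a prime, H an extraspecial p-group, and T a finite abelian p-group that is not elementary abelian (its exponent exceeds p). Set G = H × T, of order p^n. Then |M(G)| ≤ p^{(n-1)(n-2)/2 - 2}. -/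
open scoped commutatorElement

lemma aux_step {E : Type*} [Group E] (x : E) (hx : ∀ e, ⁅x, e⁆ ∈ Subgroup.center E)
    (K : Subgroup E) (hK : ∀ k ∈ K, ⁅x, k⁆ = 1) (hKi : K.index ≠ 0) :
    ∃ N : Subgroup E, N.Normal ∧ N ≤ commutator E ∧ (∀ e, ⁅x, e⁆ ∈ N) ∧
      Nat.card N ≤ K.index ∧ ∀ A : Subgroup E, (∀ e, ⁅x, e⁆ ∈ A) → N ≤ A := by
  let φ : E →* E := MonoidHom.mk' (fun e => ⁅x, e⁆) (by
    intro a b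
    have h := Subgroup.mem_center_iff.1 (hx b) a
    have h2 : ⁅x, a * b⁆ = ⁅x, a⁆ * (a * ⁅x, b⁆ * a⁻¹) := by
      simp only [commutatorElement_def]; group
    change ⁅x, a * b⁆ = ⁅x, a⁆ * ⁅x, b⁆
    rw [h2, h]; group)
  have hφ : ∀ e, φ e = ⁅x, e⁆ := fun e => rfl
  refine ⟨φ.range, ?_, ?_, ?_, ?_, ?_⟩
  · constructor
    rintro _ ⟨e, rfl⟩ g
    have h := Subgroup.mem_center_iff.1 (hx e) g
    rw [hφ, h, mul_inv_cancel_right]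
    exact ⟨e, rfl⟩
  · rintro _ ⟨e, rfl⟩
    exact Subgroup.commutator_mem_commutator (Subgroup.mem_top _) (Subgroup.mem_top _)
  · intro e; exact ⟨e, rfl⟩
  · rw [← Subgroup.index_ker]
    apply Nat.le_of_dvd (Nat.pos_of_ne_zero hKi)
    apply Subgroup.index_dvd_of_le
    intro k hk
    exact hK k hk
  · rintro A hA _ ⟨e, rfl⟩
    exact hA e

lemma aux_map_comm {E F : Type*} [Group E] [Group F] (f : E →* F)
    (hf : Function.Surjective f) : (commutator E).map f = commutator F := by
  rw [commutator_def, commutator_def, Subgroup.map_commutator,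
    ← MonoidHom.range_eq_map, MonoidHom.range_eq_top.2 hf]

lemma aux_card {E : Type*} [Group E] (N : Subgroup E) [N.Normal] (hN : N ≤ commutator E) :
    Nat.card (commutator E) = Nat.card N * Nat.card (commutator (E ⧸ N)) := by
  have h1 := Subgroup.relIndex_ker (commutator E) (QuotientGroup.mk' N)
  rw [aux_map_comm _ (QuotientGroup.mk'_surjective N), QuotientGroup.ker_mk'] at h1
  rw [← h1, ← Subgroup.relIndex_bot_left, ← Subgroup.relIndex_bot_left,
    Subgroup.relIndex_mul_relIndex _ _ _ bot_le hN]

lemma aux_comm_hom {E : Type*} [Group E] (y : E) (hy : ∀ e, ⁅y, e⁆ ∈ Subgroup.center E)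
    (z : E) (hz : z ∈ commutator E) : ⁅y, z⁆ = 1 := by
  let φ : E →* Subgroup.center E := MonoidHom.mk' (fun e => ⟨⁅y, e⁆, hy e⟩) (by
    intro a b
    apply Subtype.ext
    have h := Subgroup.mem_center_iff.1 (hy b) a
    have h2 : ⁅y, a * b⁆ = ⁅y, a⁆ * (a * ⁅y, b⁆ * a⁻¹) := by
      simp only [commutatorElement_def]; group
    change ⁅y, a * b⁆ = ⁅y, a⁆ * ⁅y, b⁆
    rw [h2, h]; group)
  have hle : commutator E ≤ φ.ker := by
    rw [commutator_def, Subgroup.commutator_le]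
    intro a _ b _
    rw [MonoidHom.mem_ker, map_commutatorElement, commutatorElement_eq_one_iff_mul_comm]
    exact Subtype.ext (Subgroup.mem_center_iff.1 (φ b).2 _)
  have h := hle hz
  exact congrArg Subtype.val (MonoidHom.mem_ker.1 h)

/-- One reduction step in the case of class two. -/
lemma aux_quot {p d : ℕ} (hp : p.Prime) {E : Type*} [Group E] (A : Subgroup E)
    (hA : A ≤ Subgroup.center E) (hEA : commutator E ≤ A) (x : E)
    (hi : (A ⊔ Subgroup.zpowers x).index ∣ p ^ d) :
    ∃ N : Subgroup E, ∃ _ : N.Normal, ∃ B : Subgroup (E ⧸ N), B ≤ Subgroup.center (E ⧸ N) ∧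
      commutator (E ⧸ N) ≤ B ∧ B.index ∣ p ^ d ∧
      Nat.card (commutator E) ≤ p ^ d * Nat.card (commutator (E ⧸ N)) := by
  have hxc : ∀ e, ⁅x, e⁆ ∈ commutator E := fun e =>
    Subgroup.commutator_mem_commutator (Subgroup.mem_top _) (Subgroup.mem_top _)
  have hpd : p ^ d ≠ 0 := pow_ne_zero _ hp.ne_zero
  obtain ⟨N, hN, hNc, hxN, hcard, hmin⟩ := aux_step x (fun e => hA (hEA (hxc e)))
    (A ⊔ Subgroup.zpowers x) (by
      have : A ⊔ Subgroup.zpowers x ≤ Subgroup.centralizer {x} := by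
        refine sup_le (hA.trans (Subgroup.center_le_centralizer _)) ?_
        rw [Subgroup.zpowers_le, Subgroup.mem_centralizer_singleton_iff]
      intro k hk
      have := Subgroup.mem_centralizer_singleton_iff.1 (this hk)
      rw [commutatorElement_eq_one_iff_mul_comm]
      exact this.symm) (fun h => by rw [h] at hi; exact hpd (Nat.eq_zero_of_zero_dvd hi))
  have hs := QuotientGroup.mk'_surjective N
  refine ⟨N, hN, (A ⊔ Subgroup.zpowers x).map (QuotientGroup.mk' N), ?_, ?_, ?_, ?_⟩
  · rw [Subgroup.map_le_iff_le_comap]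
    refine sup_le ?_ ?_
    · intro a ha
      rw [Subgroup.mem_comap, Subgroup.mem_center_iff]
      intro g
      obtain ⟨g, rfl⟩ := hs g
      rw [← map_mul, ← map_mul, Subgroup.mem_center_iff.1 (hA ha) g]
    · rw [Subgroup.zpowers_le, Subgroup.mem_comap, Subgroup.mem_center_iff]
      intro g
      obtain ⟨g, rfl⟩ := hs g
      symm
      rw [← commutatorElement_eq_one_iff_mul_comm, ← map_commutatorElement,
        ← MonoidHom.mem_ker, QuotientGroup.ker_mk']
      exact hxN g
  · rw [← aux_map_comm _ hs]
    exact Subgroup.map_mono (hEA.trans le_sup_left)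
  · exact (Subgroup.index_map_dvd _ hs).trans hi
  · rw [aux_card N hNc]
    exact Nat.mul_le_mul_right _ (hcard.trans (Nat.le_of_dvd (Nat.pos_of_ne_zero hpd) hi))

lemma aux_lt {p d : ℕ} (hp : p.Prime) {E : Type*} [Group E] (A B : Subgroup E)
    (hAB : A < B) (h : A.index ∣ p ^ (d + 1)) : B.index ∣ p ^ d := by
  have h1 : A.relIndex B * B.index = A.index := Subgroup.relIndex_mul_index hAB.le
  have h2 : A.relIndex B ≠ 1 := fun h => hAB.not_ge (Subgroup.relIndex_eq_one.1 h)
  have h3 : A.relIndex B ∣ p ^ (d + 1) := (Dvd.intro _ h1).trans h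
  obtain ⟨k, hk, hk'⟩ := (Nat.dvd_prime_pow hp).1 h3
  have hk0 : k ≠ 0 := by rintro rfl; simp [hk'] at h2
  have h4 : p ∣ A.relIndex B := by rw [hk']; exact dvd_pow_self _ hk0
  have h5 : p * B.index ∣ p * p ^ d := by
    rw [← pow_succ', ]
    exact (mul_dvd_mul_right h4 _).trans (h1 ▸ h)
  exact Nat.dvd_of_mul_dvd_mul_left hp.pos h5

lemma aux_W {p : ℕ} (hp : p.Prime) (d : ℕ) : ∀ {E : Type u} [Group E] (A : Subgroup E)
    (_ : A ≤ Subgroup.center E) (_ : commutator E ≤ A) (_ : A.index ∣ p ^ d),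
    Nat.card (commutator E) ≤ p ^ (d.choose 2) := by
  induction d with
  | zero =>
    intro E _ A hA hEA hi
    have : A = ⊤ := by simpa using hi
    rw [this] at hA
    have h : commutator E = ⊥ := by
      rw [commutator_def, Subgroup.commutator_eq_bot_iff_le_centralizer]
      exact hA.trans (Subgroup.center_le_centralizer _)
    rw [h]; simp
  | succ d ih =>
    intro E _ A hA hEA hi
    by_cases hT : A = ⊤
    · subst hT
      have h : commutator E = ⊥ := by
        rw [commutator_def, Subgroup.commutator_eq_bot_iff_le_centralizer]
        exact hA.trans (Subgroup.center_le_centralizer _)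
      rw [h]; simpa using Nat.one_le_pow _ _ hp.pos
    · obtain ⟨x, hx⟩ : ∃ x, x ∉ A := by
        by_contra! h; exact hT ((Subgroup.eq_top_iff' A).2 h)
      have hlt : A < A ⊔ Subgroup.zpowers x := by
        refine lt_of_le_not_ge le_sup_left fun h => hx (h ?_)
        exact Subgroup.mem_sup_right (Subgroup.mem_zpowers x)
      obtain ⟨N, hN, B, h1, h2, h3, h4⟩ := aux_quot hp A hA hEA x (aux_lt hp _ _ hlt hi)
      have := ih B h1 h2 h3
      refine h4.trans ((Nat.mul_le_mul_left _ this).trans_eq ?_)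
      rw [← pow_add, Nat.choose_succ_succ' d 1, Nat.choose_one_right]

lemma aux_W2 {p : ℕ} (hp : p.Prime) (d : ℕ) {E : Type u} [Group E] (A : Subgroup E)
    (hA : A ≤ Subgroup.center E) (hEA : commutator E ≤ A) (hi : A.index ∣ p ^ (d + 2))
    (x : E) (hx : x ^ p ∉ A) :
    Nat.card (commutator E) ≤ p ^ ((d + 1).choose 2) := by
  have : A.Normal := ⟨fun a ha g => by
    rw [Subgroup.mem_center_iff.1 (hA ha) g, mul_inv_cancel_right]; exact ha⟩
  have hlt1 : A < A ⊔ Subgroup.zpowers (x ^ p) := by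
    refine lt_of_le_not_ge le_sup_left fun h => hx (h ?_)
    exact Subgroup.mem_sup_right (Subgroup.mem_zpowers _)
  have hlt2 : A ⊔ Subgroup.zpowers (x ^ p) < A ⊔ Subgroup.zpowers x := by
    refine lt_of_le_not_ge (sup_le_sup_left ?_ _) fun h => hx ?_
    · rw [Subgroup.zpowers_le]; exact Subgroup.npow_mem_zpowers x p
    · have hxm : x ∈ A ⊔ Subgroup.zpowers (x ^ p) :=
        h (Subgroup.mem_sup_right (Subgroup.mem_zpowers x))
      obtain ⟨a, ha, b, hb, hab⟩ := Subgroup.mem_sup_of_normal_left.1 hxm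
      obtain ⟨k, rfl⟩ := Subgroup.mem_zpowers_iff.1 hb
      -- in the quotient
      set y : E ⧸ A := (x : E ⧸ A) with hy
      have e1 : y = (y ^ p) ^ k := by
        rw [hy, ← QuotientGroup.mk_pow, ← QuotientGroup.mk_zpow]
        conv_lhs => rw [← hab]
        rw [QuotientGroup.mk_mul, (QuotientGroup.eq_one_iff a).2 ha, one_mul]
      have e2 : y ^ (p ^ (d + 2)) = 1 := by
        obtain ⟨c, hc⟩ := hi
        rw [hc, pow_mul, Subgroup.index, pow_card_eq_one', one_pow]
      have e3 : y ^ ((1 : ℤ) - p * k) = 1 := by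
        rw [zpow_sub, zpow_one, zpow_mul, zpow_natCast, ← e1, mul_inv_cancel]
      have hc : IsCoprime ((1 : ℤ) - p * k) ((p : ℤ) ^ (d + 2)) := by
        apply IsCoprime.pow_right
        exact ⟨1, k, by ring⟩
      obtain ⟨u, v, huv⟩ := hc
      have e4 : y = 1 := by
        rw [← zpow_one y, ← huv, zpow_add, mul_comm u, mul_comm v, zpow_mul, e3, zpow_mul]
        have : y ^ ((p : ℤ) ^ (d + 2)) = 1 := by exact_mod_cast e2
        rw [this]; simp
      exact A.pow_mem ((QuotientGroup.eq_one_iff x).1 e4) p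
  obtain ⟨N, hN, B, h1, h2, h3, h4⟩ := aux_quot hp A hA hEA x
    (aux_lt hp _ _ hlt2 (aux_lt hp _ _ hlt1 hi))
  have := aux_W hp d B h1 h2 h3
  refine h4.trans ((Nat.mul_le_mul_left _ this).trans_eq ?_)
  rw [← pow_add, Nat.choose_succ_succ' d 1, Nat.choose_one_right]

lemma aux_main {p n : ℕ} (hp : p.Prime) {G : Type*} [Group G] [Finite G]
    (hG : Nat.card G = p ^ (n + 3)) (hG1 : Nat.card (commutator G) = p)
    (hG2 : commutator G ≤ Subgroup.center G) (hG3 : (Subgroup.center G).index ≤ p ^ n)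
    (t : G) (ht : t ^ p ∉ commutator G)
    {E : Type u} [Group E] (f : E →* G) (hf : Function.Surjective f)
    (hk : f.ker ≤ Subgroup.center E) :
    Nat.card (commutator E) ≤ p ^ (n + (n + 1).choose 2) := by
  have : Fact p.Prime := ⟨hp⟩
  have hmap := aux_map_comm f hf
  -- a generator
  obtain ⟨z, hz, hz1⟩ : ∃ z ∈ commutator G, z ≠ 1 := by
    by_contra! h
    have : commutator G = ⊥ := (Subgroup.eq_bot_iff_forall _).2 h
    rw [this] at hG1
    simp at hG1
    exact hp.one_lt.ne hG1
  have hzg : commutator G = Subgroup.zpowers z := by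
    symm
    apply Subgroup.eq_of_le_of_card_ge (by rwa [Subgroup.zpowers_le])
    rw [hG1, Nat.card_zpowers]
    have : orderOf z ∣ p := hG1 ▸ (Subgroup.orderOf_dvd_natCard _ hz)
    rcases (Nat.dvd_prime hp).1 this with h | h
    · exact absurd (orderOf_eq_one_iff.1 h) hz1
    · exact h.ge
  obtain ⟨x, hx, hxz⟩ : ∃ x ∈ commutator E, f x = z := by
    rw [← hmap] at hz; exact hz
  have hcen : ∀ y, f y ∈ Subgroup.center G → ∀ e, ⁅y, e⁆ ∈ f.ker := by
    intro y hy e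
    rw [MonoidHom.mem_ker, map_commutatorElement, commutatorElement_eq_one_iff_mul_comm]
    exact (Subgroup.mem_center_iff.1 hy _).symm
  have hxk := hcen x (by rw [hxz]; exact hG2 hz)
  obtain ⟨N, hN, hNc, hxN, hcard, hmin⟩ := aux_step x (fun e => hk (hxk e))
    ((Subgroup.center G).comap f) (by
      intro k hkk
      have := aux_comm_hom k (fun e => hk (hcen k hkk e)) x hx
      rw [commutatorElement_eq_one_iff_mul_comm] at this ⊢
      exact this.symm) (by
      rw [Subgroup.index_comap_of_surjective _ hf]
      exact Subgroup.index_ne_zero_of_finite)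
  rw [Subgroup.index_comap_of_surjective _ hf] at hcard
  have hNk := hmin _ hxk
  have hs := QuotientGroup.mk'_surjective N
  have hA1 : (commutator G).comap f = f.ker ⊔ Subgroup.zpowers x := by
    rw [hzg, ← hxz, ← MonoidHom.map_zpowers, Subgroup.comap_map_eq, sup_comm]
  have hB1 : ((commutator G).comap f).map (QuotientGroup.mk' N) ≤ Subgroup.center (E ⧸ N) := by
    rw [hA1, Subgroup.map_le_iff_le_comap]
    refine sup_le ?_ ?_
    · intro a ha
      rw [Subgroup.mem_comap, Subgroup.mem_center_iff]
      intro g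
      obtain ⟨g, rfl⟩ := hs g
      rw [← map_mul, ← map_mul, Subgroup.mem_center_iff.1 (hk ha) g]
    · rw [Subgroup.zpowers_le, Subgroup.mem_comap, Subgroup.mem_center_iff]
      intro g
      obtain ⟨g, rfl⟩ := hs g
      symm
      rw [← commutatorElement_eq_one_iff_mul_comm, ← map_commutatorElement,
        ← MonoidHom.mem_ker, QuotientGroup.ker_mk']
      exact hxN g
  have hB2 : commutator (E ⧸ N) ≤ ((commutator G).comap f).map (QuotientGroup.mk' N) := by
    rw [← aux_map_comm _ hs]
    apply Subgroup.map_mono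
    rw [← Subgroup.map_le_iff_le_comap, hmap]
  have hi : (commutator G).index = p ^ (n + 2) := by
    have := Subgroup.card_mul_index (commutator G)
    rw [hG1, hG, pow_succ' p (n + 2)] at this
    exact Nat.eq_of_mul_eq_mul_left hp.pos this
  have hB3 : (((commutator G).comap f).map (QuotientGroup.mk' N)).index ∣ p ^ (n + 2) := by
    refine (Subgroup.index_map_dvd _ hs).trans ?_
    rw [Subgroup.index_comap_of_surjective _ hf, hi]
  obtain ⟨w, hw⟩ := hf t
  have hB4 : (QuotientGroup.mk' N w) ^ p ∉
      ((commutator G).comap f).map (QuotientGroup.mk' N) := by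
    rw [← map_pow]
    intro h
    have h2 : w ^ p ∈ (((commutator G).comap f).map (QuotientGroup.mk' N)).comap
      (QuotientGroup.mk' N) := h
    rw [Subgroup.comap_map_eq, QuotientGroup.ker_mk', sup_eq_left.2] at h2
    · rw [Subgroup.mem_comap, map_pow, hw] at h2
      exact ht h2
    · refine hNk.trans ?_
      rw [hA1]; exact le_sup_left
  have hfin := aux_W2 hp n _ hB1 hB2 hB3 _ hB4
  rw [aux_card N hNc, pow_add]
  exact Nat.mul_le_mul (hcard.trans hG3) hfin

lemma aux_schur (G : Type u) [Group G] [Finite G] (c : ℕ)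
    (h : ∀ (E : Type u) [Group E] (f : E →* G), Function.Surjective f →
      f.ker ≤ Subgroup.center E → Nat.card (commutator E) ≤ c) :
    Nat.card (SchurMultiplier G) * Nat.card (commutator G) ≤ c := by
  set F := FreeGroup G
  set R := presentationKernel G with hR
  set g : F →* G := FreeGroup.lift (id : G → G) with hg
  have hgk : g.ker = R := rfl
  have hgs : Function.Surjective g := fun a => ⟨FreeGroup.of a, FreeGroup.lift_apply_of⟩
  have : R.Normal := by rw [← hgk]; infer_instance
  set S := ⁅(⊤ : Subgroup F), R⁆ with hS
  have hSR : S ≤ R := Subgroup.commutator_le_right _ _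
  have hSF : S ≤ commutator F := Subgroup.commutator_mono le_rfl le_top
  have h1 : Nat.card (SchurMultiplier G) = S.relIndex (R ⊓ commutator F) := rfl
  have h2 : Nat.card (commutator G) = (R ⊓ commutator F).relIndex (commutator F) := by
    rw [Subgroup.inf_relIndex_right, ← hgk, Subgroup.relIndex_ker, aux_map_comm g hgs]
  rw [h1, h2, Subgroup.relIndex_mul_relIndex _ _ _ (le_inf hSR hSF) inf_le_right]
  have h3 := Subgroup.relIndex_ker (commutator F) (QuotientGroup.mk' S)
  have hs := QuotientGroup.mk'_surjective S
  rw [aux_map_comm _ hs, QuotientGroup.ker_mk'] at h3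
  rw [h3]
  refine h (F ⧸ S) (QuotientGroup.lift S g (fun a ha => hSR ha)) ?_ ?_
  · intro a
    obtain ⟨b, rfl⟩ := hgs a
    exact ⟨QuotientGroup.mk' S b, rfl⟩
  · intro a ha
    obtain ⟨b, rfl⟩ := hs a
    have hb : b ∈ R := ha
    rw [Subgroup.mem_center_iff]
    intro e
    obtain ⟨e, rfl⟩ := hs e
    rw [← commutatorElement_eq_one_iff_mul_comm, ← map_commutatorElement,
        ← MonoidHom.mem_ker, QuotientGroup.ker_mk']
    exact Subgroup.commutator_mem_commutator (Subgroup.mem_top _) hb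

/-- If `H` is an extraspecial `p`-group and `T` is a finite abelian `p`-group that is
not elementary abelian, then `G = H × T`, of order `p^n`, satisfies
`|M(G)| ≤ p^((n-1)(n-2)/2 - 2)`. -/
theorem schurMultiplier_extraspecial_times_nonelementary_le {p n : ℕ} (hp : p.Prime)
    {H : Type*} [Group H] [Finite H] (hH : IsExtraspecial p H)
    {T : Type*} [CommGroup T] [Finite T] (hT : IsPGroup p T)
    (hTexp : p < Monoid.exponent T)
    (hG : Nat.card (H × T) = p ^ n) :
    Nat.card (SchurMultiplier (H × T)) ≤ p ^ ((n - 1) * (n - 2) / 2 - 2) := by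
  have hcomm : commutator (H × T) = (commutator H).prod ⊥ := by
    rw [commutator_def, commutator_def, ← Subgroup.top_prod_top,
      Subgroup.commutator_prod_prod]
    congr 1
    rw [← commutator_def]
    exact (commutator_eq_bot_iff_center_eq_top T).2 CommGroup.center_eq_top
  obtain ⟨hc1, -, hc3⟩ := hH
  have hcc : Nat.card (commutator (H × T)) = p := by
    rw [hcomm, ← hc1, Nat.card_congr (Subgroup.prodEquiv _ _).toEquiv, Nat.card_prod, hc3]
    simp
  have hcle : (Subgroup.center H).prod (⊤ : Subgroup T) ≤ Subgroup.center (H × T) := by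
    rintro ⟨a, b⟩ ⟨ha, -⟩
    rw [Subgroup.mem_center_iff]
    rintro ⟨c, d⟩
    exact Prod.ext (Subgroup.mem_center_iff.1 ha c) (mul_comm d b)
  have hG2 : commutator (H × T) ≤ Subgroup.center (H × T) := by
    refine le_trans ?_ hcle
    rw [hcomm, hc1]
    exact Subgroup.prod_mono le_rfl le_top
  have : Fact p.Prime := ⟨hp⟩
  have hT2 : p ^ 2 ≤ Nat.card T := by
    obtain ⟨k, hk⟩ := IsPGroup.iff_card.1 hT
    rw [hk]
    apply Nat.pow_le_pow_right hp.pos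
    by_contra! hlt
    have h1 : Monoid.exponent T ≤ p ^ k := by
      rw [← hk]
      exact Nat.le_of_dvd Nat.card_pos Group.exponent_dvd_nat_card
    have h2 : p ^ k ≤ p ^ 1 := Nat.pow_le_pow_right hp.pos (by omega)
    rw [pow_one] at h2
    omega
  have hZ : p ^ 3 ≤ Nat.card (Subgroup.center (H × T)) := by
    refine le_trans ?_ (Nat.le_of_dvd Nat.card_pos (Subgroup.card_dvd_of_le hcle))
    rw [Nat.card_congr (Subgroup.prodEquiv _ _).toEquiv, Nat.card_prod, hc3,
      Subgroup.card_top, pow_succ']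
    exact Nat.mul_le_mul_left _ hT2
  have hidx := Subgroup.card_mul_index (Subgroup.center (H × T))
  rw [hG] at hidx
  have hn3 : 3 ≤ n := by
    have h1 : p ^ 3 ≤ p ^ n := by
      rw [← hG]; exact hZ.trans (Nat.le_of_dvd Nat.card_pos (Subgroup.card_subgroup_dvd_card _))
    exact (Nat.pow_le_pow_iff_right hp.one_lt).1 h1
  obtain ⟨m, rfl⟩ : ∃ m, n = m + 3 := ⟨n - 3, by omega⟩
  have hG3 : (Subgroup.center (H × T)).index ≤ p ^ m := by
    have h1 := (Nat.mul_le_mul_right (Subgroup.center (H × T)).index hZ).trans_eq hidx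
    rw [pow_add, mul_comm (p ^ m)] at h1
    exact Nat.le_of_mul_le_mul_left h1 (pow_pos hp.pos 3)
  obtain ⟨t, ht⟩ : ∃ t : T, t ^ p ≠ 1 := by
    by_contra! h
    exact absurd (Nat.le_of_dvd hp.pos (Monoid.exponent_dvd_of_forall_pow_eq_one h)) (by omega)
  have htp : ((1, t) : H × T) ^ p ∉ commutator (H × T) := by
    rw [hcomm]
    rintro ⟨-, h⟩
    exact ht (by simpa using h)
  have key := aux_schur (H × T) (p ^ (m + (m + 1).choose 2)) (fun E _ f hf hk =>
    aux_main hp hG hcc hG2 hG3 (1, t) htp f hf hk)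
  rw [hcc] at key
  rcases m with _ | m
  · simp at key
    have h2 := hp.two_le
    have h0 : Nat.card (SchurMultiplier (H × T)) = 0 := by
      by_contra h
      have h1 := Nat.mul_le_mul (Nat.one_le_iff_ne_zero.2 h) h2
      omega
    rw [h0]; exact Nat.zero_le _
  · have e : (m + 1 + 3 - 1) * (m + 1 + 3 - 2) / 2 - 2 = m + (m + 2).choose 2 := by
      have h1 : (m + 1 + 3 - 1) * (m + 1 + 3 - 2) / 2 = (m + 3).choose 2 := by
        rw [Nat.choose_two_right]; rfl
      rw [h1, Nat.choose_succ_succ' (m + 2) 1, Nat.choose_one_right, one_add_one_eq_two]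
      omega
    rw [e]
    have e2 : m + 1 + (m + 1 + 1).choose 2 = (m + (m + 2).choose 2) + 1 := by
      rw [show m + 1 + 1 = m + 2 from rfl]; omega
    rw [e2, pow_succ] at key
    exact Nat.le_of_mul_le_mul_right key hp.pos
end
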